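/- For every positive integer k there exists an integer w(k) such that for every integer r ≥ w(k) with r and k not both even, R_ℓ(K_{1,r}, k) = (r-1)k + 2 = R(K_{1,r}, k). -/

import Mathlib

/-- The star `K_{1,r}` with centre `0` and `r` leaves. -/
def starGraph (r : ℕ) : SimpleGraph (Fin (r + 1)) :=
  SimpleGraph.fromRel (fun a _ => a = 0)

/-- A colouring `c` of the edges of the complete graph on `Fin n` contains a
monochromatic copy of the graph `G`. -/
def HasMonoCopy {α β : Type*} (G : SimpleGraph α) {n : ℕ} (c : Sym2 (Fin n) → β) : Prop :=
  ∃ (f : α → Fin n) (x : β), Function.Injective f ∧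
    ∀ a b, G.Adj a b → c s(f a, f b) = x

/-- The `k`-colour list Ramsey number of a graph `G`: the least `n` for which one can
assign a list of `k` colours to each edge of `K_n` so that every colouring of the edges
from these lists contains a monochromatic copy of `G`. -/
noncomputable def listRamsey {α : Type*} (G : SimpleGraph α) (k : ℕ) : ℕ :=
  sInf { n : ℕ | ∃ L : Sym2 (Fin n) → Finset ℕ,
    (∀ e : Sym2 (Fin n), ¬ e.IsDiag → (L e).card = k) ∧
    ∀ c : Sym2 (Fin n) → ℕ, (∀ e : Sym2 (Fin n), ¬ e.IsDiag → c e ∈ L e) →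
      HasMonoCopy G c }

/-- The ordinary `k`-colour Ramsey number of a graph `G`: the least `n` such that every
`k`-colouring of the edges of `K_n` contains a monochromatic copy of `G`. -/
noncomputable def ramsey {α : Type*} (G : SimpleGraph α) (k : ℕ) : ℕ :=
  sInf { n : ℕ | ∀ c : Sym2 (Fin n) → Fin k, HasMonoCopy G c }

open Finset

/-- A stable matching in a finite bipartite graph `S ⊆ A × B` whose rows prefer large values of
`f` and whose columns prefer small ones. -/
theorem exists_stable_matching {A B : Type*} [DecidableEq A] [DecidableEq B] (f : A × B → ℕ)
    (S : Finset (A × B))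
    (hrow : ∀ p ∈ S, ∀ q ∈ S, p.1 = q.1 → f p = f q → p = q)
    (hcol : ∀ p ∈ S, ∀ q ∈ S, p.2 = q.2 → f p = f q → p = q) :
    ∃ M ⊆ S, (∀ p ∈ M, ∀ q ∈ M, p.1 = q.1 ∨ p.2 = q.2 → p = q) ∧
      ∀ p ∈ S, p ∉ M → ∃ q ∈ M, (q.1 = p.1 ∧ f p < f q) ∨ (q.2 = p.2 ∧ f q < f p) := by
  induction S using Finset.strongInduction with
  | H S ih =>
    by_cases hconf : ∃ p ∈ S, ∃ q ∈ S, (∀ e ∈ S, e.1 = p.1 → f e ≤ f p) ∧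
        (∀ e ∈ S, e.1 = q.1 → f e ≤ f q) ∧ p.2 = q.2 ∧ f p < f q
    · obtain ⟨p, hp, q, hq, hpmax, hqmax, hpq, hlt⟩ := hconf
      obtain ⟨M, hMS, hM, hdom⟩ := ih (S.erase q) (erase_ssubset hq)
        (fun a ha b hb => hrow a (mem_of_mem_erase ha) b (mem_of_mem_erase hb))
        (fun a ha b hb => hcol a (mem_of_mem_erase ha) b (mem_of_mem_erase hb))
      refine ⟨M, hMS.trans (erase_subset _ _), hM, fun e he heM => ?_⟩
      by_cases heq : e = q
      · subst heq
        by_cases hpM : p ∈ M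
        · exact ⟨p, hpM, Or.inr ⟨hpq, hlt⟩⟩
        · have hpe : p ≠ e := fun h => by simp [h] at hlt
          obtain ⟨g, hg, h | h⟩ := hdom p (mem_erase.2 ⟨hpe, hp⟩) hpM
          · exact absurd (hpmax g (mem_of_mem_erase (hMS hg)) h.1) (by omega)
          · exact ⟨g, hg, Or.inr ⟨h.1.trans hpq, h.2.trans hlt⟩⟩
      · exact hdom e (mem_erase.2 ⟨heq, he⟩) heM
    · push Not at hconf
      refine ⟨S.filter fun p => ∀ e ∈ S, e.1 = p.1 → f e ≤ f p, filter_subset _ _, ?_, ?_⟩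
      · intro p hp q hq h
        rw [mem_filter] at hp hq
        rcases h with h | h
        · exact hrow p hp.1 q hq.1 h (le_antisymm (hq.2 p hp.1 h) (hp.2 q hq.1 h.symm))
        · exact hcol p hp.1 q hq.1 h (le_antisymm
            (hconf q hq.1 p hp.1 hq.2 hp.2 h.symm) (hconf p hp.1 q hq.1 hp.2 hq.2 h))
      · intro p hp hpM
        obtain ⟨q, hq, hmax⟩ := exists_max_image (S.filter fun e => e.1 = p.1) f
          ⟨p, mem_filter.2 ⟨hp, rfl⟩⟩
        rw [mem_filter] at hq
        have hqM : ∀ e ∈ S, e.1 = q.1 → f e ≤ f q := fun e he h =>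
          hmax e (mem_filter.2 ⟨he, h.trans hq.2⟩)
        refine ⟨q, mem_filter.2 ⟨hq.1, hqM⟩, Or.inl ⟨hq.2, ?_⟩⟩
        by_contra hle
        refine hpM (mem_filter.2 ⟨hp, fun e he h => ?_⟩)
        exact (hqM e he (h.trans hq.2.symm)).trans (not_lt.1 hle)

/-- Galvin's list colouring argument, in terms of the number of neighbours preferred to each
edge. -/
theorem exists_list_edge_coloring_of_outdegree_lt {A B C : Type*} [DecidableEq A] [DecidableEq B]
    [DecidableEq C] [Inhabited C] (f : A × B → ℕ) (S : Finset (A × B)) (L : A × B → Finset C)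
    (hrow : ∀ p ∈ S, ∀ q ∈ S, p.1 = q.1 → f p = f q → p = q)
    (hcol : ∀ p ∈ S, ∀ q ∈ S, p.2 = q.2 → f p = f q → p = q)
    (hL : ∀ p ∈ S, #{q ∈ S | (q.1 = p.1 ∧ f p < f q) ∨ (q.2 = p.2 ∧ f q < f p)} < #(L p)) :
    ∃ c : A × B → C, (∀ p ∈ S, c p ∈ L p) ∧
      ∀ p ∈ S, ∀ q ∈ S, p.1 = q.1 ∨ p.2 = q.2 → c p = c q → p = q := by
  induction S using Finset.strongInduction generalizing L with
  | H S ih =>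
    rcases S.eq_empty_or_nonempty with rfl | ⟨e, he⟩
    · exact ⟨fun _ => default, by simp, by simp⟩
    obtain ⟨x, hx⟩ : (L e).Nonempty := card_pos.1 (by have := hL e he; omega)
    obtain ⟨M, hMS, hM, hdom⟩ := exists_stable_matching f (S.filter fun p => x ∈ L p)
      (fun a ha b hb => hrow a (mem_filter.1 ha).1 b (mem_filter.1 hb).1)
      (fun a ha b hb => hcol a (mem_filter.1 ha).1 b (mem_filter.1 hb).1)
    have hMS' : M ⊆ S := hMS.trans (filter_subset _ _)
    have hMne : M.Nonempty := by
      by_cases heM : e ∈ M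
      · exact ⟨e, heM⟩
      · obtain ⟨q, hq, -⟩ := hdom e (mem_filter.2 ⟨he, hx⟩) heM
        exact ⟨q, hq⟩
    obtain ⟨c, hc, hproper⟩ := ih (S \ M) (sdiff_ssubset hMS' hMne) (fun p => (L p).erase x)
      (fun a ha b hb => hrow a (mem_sdiff.1 ha).1 b (mem_sdiff.1 hb).1)
      (fun a ha b hb => hcol a (mem_sdiff.1 ha).1 b (mem_sdiff.1 hb).1) (by
        intro p hp
        rw [mem_sdiff] at hp
        have hsub : {q ∈ S \ M | (q.1 = p.1 ∧ f p < f q) ∨ (q.2 = p.2 ∧ f q < f p)} ⊆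
            {q ∈ S | (q.1 = p.1 ∧ f p < f q) ∨ (q.2 = p.2 ∧ f q < f p)} :=
          filter_subset_filter _ sdiff_subset
        by_cases hxp : x ∈ L p
        · obtain ⟨q, hq, hqp⟩ := hdom p (mem_filter.2 ⟨hp.1, hxp⟩) hp.2
          have hlt := card_lt_card (Finset.ssubset_iff_subset_ne.2 ⟨hsub, fun h => by
            have : q ∈ {q ∈ S | (q.1 = p.1 ∧ f p < f q) ∨ (q.2 = p.2 ∧ f q < f p)} :=
              mem_filter.2 ⟨hMS' hq, hqp⟩
            rw [← h, mem_filter, mem_sdiff] at this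
            exact this.1.2 hq⟩)
          have := hL p hp.1
          rw [card_erase_of_mem hxp]
          omega
        · rw [erase_eq_of_notMem hxp]
          exact (card_le_card hsub).trans_lt (hL p hp.1))
    refine ⟨fun p => if p ∈ M then x else c p, fun p hp => ?_, fun p hp q hq h => ?_⟩
    · by_cases hpM : p ∈ M
      · simpa [hpM] using (mem_filter.1 (hMS hpM)).2
      · simpa [hpM] using mem_of_mem_erase (hc p (mem_sdiff.2 ⟨hp, hpM⟩))
    · by_cases hpM : p ∈ M <;> by_cases hqM : q ∈ M <;> simp only [hpM, hqM, if_true, if_false]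
      · exact fun _ => hM p hpM q hqM h
      · exact fun hxc => absurd hxc.symm (ne_of_mem_erase (hc q (mem_sdiff.2 ⟨hq, hqM⟩)))
      · exact fun hxc => absurd hxc (ne_of_mem_erase (hc p (mem_sdiff.2 ⟨hp, hpM⟩)))
      · exact hproper p (mem_sdiff.2 ⟨hp, hpM⟩) q (mem_sdiff.2 ⟨hq, hqM⟩) h

/-- Galvin's theorem: a bipartite graph with a proper `d`-edge-colouring is `d`-edge-choosable. -/
theorem exists_list_edge_coloring_of_proper {A B C : Type*} [DecidableEq A] [DecidableEq B]
    [DecidableEq C] [Inhabited C] {d : ℕ} (f : A × B → ℕ) (S : Finset (A × B))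
    (L : A × B → Finset C) (hf : ∀ p ∈ S, f p < d)
    (hrow : ∀ p ∈ S, ∀ q ∈ S, p.1 = q.1 → f p = f q → p = q)
    (hcol : ∀ p ∈ S, ∀ q ∈ S, p.2 = q.2 → f p = f q → p = q)
    (hL : ∀ p ∈ S, d ≤ #(L p)) :
    ∃ c : A × B → C, (∀ p ∈ S, c p ∈ L p) ∧
      ∀ p ∈ S, ∀ q ∈ S, p.1 = q.1 ∨ p.2 = q.2 → c p = c q → p = q := by
  refine exists_list_edge_coloring_of_outdegree_lt f S L hrow hcol fun p hp => ?_
  have hmaps : Set.MapsTo f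
      (({q ∈ S | (q.1 = p.1 ∧ f p < f q) ∨ (q.2 = p.2 ∧ f q < f p)} : Finset (A × B)) : Set (A × B))
      (((range d).erase (f p) : Finset ℕ) : Set ℕ) := by
    intro q hq
    simp only [coe_filter, Set.mem_ofPred_eq] at hq
    rw [mem_coe, mem_erase, mem_range]
    exact ⟨by omega, hf q hq.1⟩
  have hinj : Set.InjOn f
      (({q ∈ S | (q.1 = p.1 ∧ f p < f q) ∨ (q.2 = p.2 ∧ f q < f p)} : Finset (A × B)) :
        Set (A × B)) := by
    intro a ha b hb hab
    simp only [coe_filter, Set.mem_ofPred_eq] at ha hb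
    rcases ha.2 with h | h <;> rcases hb.2 with h' | h'
    · exact hrow a ha.1 b hb.1 (h.1.trans h'.1.symm) hab
    · omega
    · omega
    · exact hcol a ha.1 b hb.1 (h.1.trans h'.1.symm) hab
  have hcard := card_le_card_of_injOn f hmaps hinj
  have := hf p hp
  rw [card_erase_of_mem (mem_range.2 this), card_range] at hcard
  have := hL p hp
  omega

/-- König's edge colouring theorem for regular bipartite graphs with parts of equal size. -/
theorem exists_proper_edge_coloring_of_regular {V : Type*} [Fintype V] [DecidableEq V] (d : ℕ)
    (S : Finset (V × V)) (hrow : ∀ v, #{u | (v, u) ∈ S} = d)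
    (hcol : ∀ v, #{u | (u, v) ∈ S} = d) :
    ∃ f : V × V → ℕ, (∀ p ∈ S, f p < d) ∧
      (∀ p ∈ S, ∀ q ∈ S, p.1 = q.1 → f p = f q → p = q) ∧
      (∀ p ∈ S, ∀ q ∈ S, p.2 = q.2 → f p = f q → p = q) := by
  induction d generalizing S with
  | zero =>
    have hS : ∀ p, p ∉ S := fun p hp => by
      have := card_eq_zero.1 (hrow p.1)
      exact notMem_empty p.2 (this ▸ mem_filter.2 ⟨mem_univ _, hp⟩)
    exact ⟨fun _ => 0, fun p hp => absurd hp (hS p), fun p hp => absurd hp (hS p),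
      fun p hp => absurd hp (hS p)⟩
  | succ d ih =>
    obtain ⟨g, hginj, hg⟩ := (all_card_le_biUnion_card_iff_exists_injective
      (fun v : V => ({u | (v, u) ∈ S} : Finset V))).1 (by
        intro T
        refine Nat.le_of_mul_le_mul_right (card_mul_le_card_mul (fun v u => (v, u) ∈ S)
          (m := d + 1) (n := d + 1) ?_ ?_) d.succ_pos
        · intro v hv
          rw [← hrow v]
          refine card_le_card fun u hu => (mem_bipartiteAbove _).2 ?_
          exact ⟨mem_biUnion.2 ⟨v, hv, hu⟩, (mem_filter.1 hu).2⟩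
        · intro u _
          rw [← hcol u]
          exact card_le_card fun v hv =>
            mem_filter.2 ⟨mem_univ _, ((mem_bipartiteBelow _).1 hv).2⟩)
    have hgS : ∀ v, (v, g v) ∈ S := fun v => (mem_filter.1 (hg v)).2
    have hgsurj : Function.Surjective g := Finite.surjective_of_injective hginj
    obtain ⟨f, hf, hfrow, hfcol⟩ := ih (S.filter fun p => p.2 ≠ g p.1) (by
        intro v
        have : ({u | (v, u) ∈ S.filter fun p => p.2 ≠ g p.1} : Finset V) =
            ({u | (v, u) ∈ S} : Finset V).erase (g v) := by
          ext u; simp [and_comm]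
        rw [this, card_erase_of_mem (by simpa using hgS v), hrow, Nat.add_sub_cancel]) (by
        intro v
        obtain ⟨w, rfl⟩ := hgsurj v
        have : ({u | (u, g w) ∈ S.filter fun p => p.2 ≠ g p.1} : Finset V) =
            ({u | (u, g w) ∈ S} : Finset V).erase w := by
          ext u; simp [and_comm, hginj.eq_iff, eq_comm]
        rw [this, card_erase_of_mem (by simpa using hgS w), hcol, Nat.add_sub_cancel])
    have hlt : ∀ p ∈ S, p.2 ≠ g p.1 → f p < d := fun p hp h => hf p (mem_filter.2 ⟨hp, h⟩)
    refine ⟨fun p => if p.2 = g p.1 then d else f p, ?_, ?_, ?_⟩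
    · intro p hp
      have := hlt p hp
      dsimp only
      split_ifs with h
      · omega
      · exact (this h).trans (Nat.lt_succ_self d)
    · intro p hp q hq hpq
      have h1 := hlt p hp
      have h2 := hlt q hq
      dsimp only
      split_ifs with h h' h'
      · exact fun _ => Prod.ext hpq (by rw [h, h', hpq])
      · exact fun h3 => absurd (h2 h') (by omega)
      · exact fun h3 => absurd (h1 h) (by omega)
      · exact hfrow p (mem_filter.2 ⟨hp, h⟩) q (mem_filter.2 ⟨hq, h'⟩) hpq
    · intro p hp q hq hpq
      have h1 := hlt p hp
      have h2 := hlt q hq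
      dsimp only
      split_ifs with h h' h'
      · exact fun _ => Prod.ext (hginj (by rw [← h, ← h', hpq])) hpq
      · exact fun h3 => absurd (h2 h') (by omega)
      · exact fun h3 => absurd (h1 h) (by omega)
      · exact hfcol p (mem_filter.2 ⟨hp, h⟩) q (mem_filter.2 ⟨hq, h'⟩) hpq

/-- A regular graph of even degree has a balanced orientation. -/
theorem exists_balanced_orientation {V : Type*} [Fintype V] [DecidableEq V] (G : SimpleGraph V)
    [DecidableRel G.Adj] (t : ℕ) (hG : G.IsRegularOfDegree (2 * t)) :
    ∃ S : Finset (V × V), (∀ u v, (u, v) ∈ S → (v, u) ∉ S) ∧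
      (∀ u v, G.Adj u v ↔ (u, v) ∈ S ∨ (v, u) ∈ S) ∧
      (∀ v, #{u | (v, u) ∈ S} = t) ∧ ∀ v, #{u | (u, v) ∈ S} = t := by
  classical
  obtain ⟨g, hginj, hg⟩ := (all_card_le_biUnion_card_iff_exists_injective
    (fun e : G.edgeSet => ({p | p.1 ∈ (e : Sym2 V)} : Finset (V × Fin t)))).1 (by
      intro F
      rcases F.eq_empty_or_nonempty with rfl | ⟨e, -⟩
      · simp
      have ht : 0 < 2 * t := by
        obtain ⟨e, he⟩ := e
        induction e with | _ u v =>
        rw [← hG u]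
        exact (G.degree_pos_iff_exists_adj u).2 ⟨v, he⟩
      refine Nat.le_of_mul_le_mul_right (card_mul_le_card_mul
          (fun (e : G.edgeSet) (p : V × Fin t) => p.1 ∈ (e : Sym2 V))
          (m := 2 * t) (n := 2 * t) ?_ ?_) ht
      · rintro ⟨e, he⟩ heF
        induction e with | _ u v =>
        have huv : u ≠ v := G.ne_of_adj he
        have : #(({u, v} : Finset V) ×ˢ (univ : Finset (Fin t))) = 2 * t := by
          rw [card_product, card_pair huv, card_univ, Fintype.card_fin]
        rw [← this]
        refine card_le_card fun p hp => (mem_bipartiteAbove _).2 ?_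
        have hp' : p.1 ∈ s(u, v) := by simpa using hp
        exact ⟨mem_biUnion.2 ⟨_, heF, by simpa using hp'⟩, hp'⟩
      · rintro ⟨v, i⟩ -
        rw [← hG v, ← G.card_incidenceFinset_eq_degree]
        refine card_le_card_of_injOn Subtype.val ?_ Subtype.val_injective.injOn
        intro e he
        simpa [SimpleGraph.incidenceSet] using ((mem_bipartiteBelow _).1 he).2)
  have hmem : ∀ e : G.edgeSet, (g e).1 ∈ (e : Sym2 V) := fun e => (mem_filter.1 (hg e)).2
  set S : Finset (V × V) := {p | ∃ h : G.Adj p.1 p.2, (g ⟨s(p.1, p.2), h⟩).1 = p.1} with hS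
  have hSmem : ∀ u v, (u, v) ∈ S ↔ ∃ h : G.Adj u v, (g ⟨s(u, v), h⟩).1 = u := by simp [hS]
  have hanti : ∀ u v, (u, v) ∈ S → (v, u) ∉ S := by
    intro u v h h'
    obtain ⟨ha, h⟩ := (hSmem u v).1 h
    obtain ⟨hb, h'⟩ := (hSmem v u).1 h'
    have : (⟨s(v, u), hb⟩ : G.edgeSet) = ⟨s(u, v), ha⟩ := Subtype.ext Sym2.eq_swap
    rw [this, h] at h'
    exact G.ne_of_adj ha h'
  have hadj : ∀ u v, G.Adj u v ↔ (u, v) ∈ S ∨ (v, u) ∈ S := by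
    intro u v
    constructor
    · intro h
      rcases Sym2.mem_iff.1 (hmem ⟨s(u, v), h⟩) with h' | h'
      · exact Or.inl ((hSmem u v).2 ⟨h, h'⟩)
      · have : (⟨s(u, v), h⟩ : G.edgeSet) = ⟨s(v, u), h.symm⟩ := Subtype.ext Sym2.eq_swap
        exact Or.inr ((hSmem v u).2 ⟨h.symm, this ▸ h'⟩)
    · rintro (h | h)
      · exact ((hSmem u v).1 h).1
      · exact ((hSmem v u).1 h).1.symm
  have hout : ∀ v, #{u | (v, u) ∈ S} ≤ t := by
    intro v
    rw [← Fintype.card_subtype, ← Fintype.card_fin t]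
    refine Fintype.card_le_of_injective (fun u : {u // (v, u) ∈ S} =>
      (g ⟨s(v, (u : V)), ((hSmem v u).1 u.2).1⟩).2) fun a b hab => ?_
    obtain ⟨ha, ha'⟩ := (hSmem v a).1 a.2
    obtain ⟨hb, hb'⟩ := (hSmem v b).1 b.2
    have hE := congrArg Subtype.val (hginj (Prod.ext (ha'.trans hb'.symm) hab))
    exact Subtype.ext (Sym2.congr_right.1 hE)
  have hdeg : ∀ v, #{u | (v, u) ∈ S} + #{u | (u, v) ∈ S} = 2 * t := by
    intro v
    rw [← hG v, ← G.card_neighborFinset_eq_degree, ← card_union_of_disjoint]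
    · congr 1
      ext u
      simp [hadj]
    · rw [disjoint_filter]
      exact fun u _ => hanti v u
  have hsum : ∑ v, #{u | (v, u) ∈ S} = ∑ v, #{u | (u, v) ∈ S} :=
    sum_card_bipartiteAbove_eq_sum_card_bipartiteBelow (fun u v => (u, v) ∈ S)
  have hle : ∀ v ∈ univ, #{u | (v, u) ∈ S} ≤ #{u | (u, v) ∈ S} := fun v _ => by
    have := hout v
    have := hdeg v
    omega
  have heq := (sum_eq_sum_iff_of_le hle).1 hsum
  refine ⟨S, hanti, hadj, fun v => ?_, fun v => ?_⟩ <;>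
  · have := heq v (mem_univ v)
    have := hdeg v
    omega

/-- An oriented graph `S` whose bipartite double cover has a proper `s * k`-edge-colouring can be
coloured from lists of size `k` so that every colour occurs at most `s` times among the arcs
leaving, and among the arcs entering, any vertex. -/
theorem exists_list_coloring_of_orientation {V : Type*} [Fintype V] [DecidableEq V] {k s : ℕ}
    (S : Finset (V × V)) (f : V × V → ℕ) (L : Sym2 V → Finset ℕ)
    (hanti : ∀ u v, (u, v) ∈ S → (v, u) ∉ S) (hf : ∀ p ∈ S, f p < k * s)
    (hrow : ∀ p ∈ S, ∀ q ∈ S, p.1 = q.1 → f p = f q → p = q)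
    (hcol : ∀ p ∈ S, ∀ q ∈ S, p.2 = q.2 → f p = f q → p = q)
    (hL : ∀ e : Sym2 V, ¬ e.IsDiag → #(L e) = k) :
    ∃ c : Sym2 V → ℕ, (∀ u v, (u, v) ∈ S → c s(u, v) ∈ L s(u, v)) ∧
      (∀ v x, #{u | (v, u) ∈ S ∧ c s(v, u) = x} ≤ s) ∧
      ∀ v x, #{u | (u, v) ∈ S ∧ c s(v, u) = x} ≤ s := by
  classical
  have hne : ∀ u v, (u, v) ∈ S → u ≠ v := by
    rintro u v h rfl
    exact hanti u u h h
  obtain ⟨c, hc, hproper⟩ := exists_list_edge_coloring_of_proper f S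
    (fun p => L s(p.1, p.2) ×ˢ range s) hf hrow hcol (by
      rintro ⟨u, v⟩ hp
      rw [card_product, card_range, hL _ (by simpa using hne u v hp)])
  let D : Sym2 V → ℕ := fun e => if h : ∃ p ∈ S, s(p.1, p.2) = e then (c h.choose).1 else 0
  have hD : ∀ u v, (u, v) ∈ S → D s(u, v) = (c (u, v)).1 := by
    intro u v h
    have hex : ∃ p ∈ S, s(p.1, p.2) = s(u, v) := ⟨(u, v), h, rfl⟩
    have hchoose : hex.choose = (u, v) := by
      obtain ⟨h1, h2⟩ := hex.choose_spec
      rcases Sym2.eq_iff.1 h2 with h3 | h3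
      · exact Prod.ext h3.1 h3.2
      · exact absurd ((Prod.ext h3.1 h3.2 : hex.choose = (v, u)) ▸ h1) (hanti u v h)
    simp only [D, dif_pos hex, hchoose]
  have hcount : ∀ (T : Finset V) (F : V → V × V), Function.Injective F →
      (∀ u ∈ T, F u ∈ S) → (∀ u ∈ T, ∀ w ∈ T, (F u).1 = (F w).1 ∨ (F u).2 = (F w).2) →
      (∀ u ∈ T, ∀ w ∈ T, (c (F u)).1 = (c (F w)).1) → #T ≤ s := by
    intro T F hF hTS hT hx
    rw [← card_range s]
    refine card_le_card_of_injOn (fun u => (c (F u)).2) ?_ ?_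
    · exact fun u hu => (mem_product.1 (hc _ (hTS u hu))).2
    · intro u hu w hw huw
      exact hF (hproper _ (hTS u hu) _ (hTS w hw) (hT u hu w hw) (Prod.ext (hx u hu w hw) huw))
  refine ⟨D, fun u v h => ?_, fun v x => ?_, fun v x => ?_⟩
  · rw [hD u v h]
    exact (mem_product.1 (hc _ h)).1
  · refine hcount _ (fun u => (v, u)) (Prod.mk_right_injective v) ?_ (fun _ _ _ _ => Or.inl rfl) ?_
    · exact fun u hu => (mem_filter.1 hu).2.1
    · intro u hu w hw
      rw [mem_filter] at hu hw
      rw [← hD v u hu.2.1, ← hD v w hw.2.1, hu.2.2, hw.2.2]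
  · refine hcount _ (fun u => (u, v)) (Prod.mk_left_injective v) ?_ (fun _ _ _ _ => Or.inr rfl) ?_
    · exact fun u hu => (mem_filter.1 hu).2.1
    · intro u hu w hw
      rw [mem_filter] at hu hw
      rw [← hD u v hu.2.1, ← hD w v hw.2.1, Sym2.eq_swap, hu.2.2, Sym2.eq_swap, hw.2.2]

/-- A graph that is regular of degree `2 * (k * s)` can be coloured from lists of size `k` so that
every colour class has maximum degree at most `2 * s`. -/
theorem exists_list_coloring_of_even_regular {V : Type*} [Fintype V] [DecidableEq V] {k s : ℕ}
    (G : SimpleGraph V) [DecidableRel G.Adj] (hG : G.IsRegularOfDegree (2 * (k * s)))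
    (L : Sym2 V → Finset ℕ) (hL : ∀ e : Sym2 V, ¬ e.IsDiag → #(L e) = k) :
    ∃ c : Sym2 V → ℕ, (∀ u v, G.Adj u v → c s(u, v) ∈ L s(u, v)) ∧
      ∀ v x, #{u | G.Adj v u ∧ c s(v, u) = x} ≤ 2 * s := by
  obtain ⟨S, hanti, hadj, hout, hin⟩ := exists_balanced_orientation G (k * s) hG
  obtain ⟨f, hf, hrow, hcol⟩ := exists_proper_edge_coloring_of_regular (k * s) S hout hin
  obtain ⟨c, hc, h1, h2⟩ := exists_list_coloring_of_orientation S f L hanti hf hrow hcol hL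
  refine ⟨c, fun u v h => ?_, fun v x => ?_⟩
  · rcases (hadj u v).1 h with h | h
    · exact hc u v h
    · rw [Sym2.eq_swap]
      exact hc v u h
  · have : ({u | G.Adj v u ∧ c s(v, u) = x} : Finset V) =
        ({u | (v, u) ∈ S ∧ c s(v, u) = x} : Finset V) ∪
          ({u | (u, v) ∈ S ∧ c s(v, u) = x} : Finset V) := by
      ext u
      simp [hadj, or_and_right]
    rw [this, two_mul]
    exact (card_union_le _ _).trans (add_le_add (h1 v x) (h2 v x))

/-- The graph on `Fin n` joining vertices whose sum modulo `n` is one of the odd numbers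
`1, 3, …, 2 * k - 1`. -/
def oddSumGraph (n k : ℕ) : SimpleGraph (Fin n) :=
  SimpleGraph.fromRel fun x y => ((x : ℕ) + y) % n % 2 = 1 ∧ ((x : ℕ) + y) % n < 2 * k

theorem mod_two_of_even {n : ℕ} (hn : Even n) (a : ℕ) : a % n % 2 = a % 2 :=
  Nat.mod_mod_of_dvd a hn.two_dvd

theorem oddSumGraph_adj {n k : ℕ} (hn : Even n) (x y : Fin n) : (oddSumGraph n k).Adj x y ↔
    ((x : ℕ) + y) % n % 2 = 1 ∧ ((x : ℕ) + y) % n < 2 * k := by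
  rw [oddSumGraph, SimpleGraph.fromRel_adj, add_comm (y : ℕ) x, or_self, and_iff_right_iff_imp]
  rintro ⟨h, -⟩ rfl
  rw [mod_two_of_even hn] at h
  omega

theorem eq_of_add_mod_eq {n : ℕ} {x y z : Fin n} (h : ((x : ℕ) + y) % n = ((x : ℕ) + z) % n) :
    y = z := by
  have : (y : ℕ) ≡ z [MOD n] := Nat.ModEq.add_left_cancel' (x : ℕ) h
  exact Fin.ext (by rw [← Nat.mod_eq_of_lt y.2, ← Nat.mod_eq_of_lt z.2]; exact this)

theorem oddSumGraph_isRegularOfDegree {n k : ℕ} (hn : Even n) (hkn : 2 * k ≤ n)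
    [DecidableRel (oddSumGraph n k).Adj] : (oddSumGraph n k).IsRegularOfDegree k := by
  intro x
  have hx := x.2
  rw [← SimpleGraph.card_neighborFinset_eq_degree]
  refine Eq.trans ?_ (card_range k)
  refine card_bij (fun y _ => ((x : ℕ) + y) % n / 2) ?_ ?_ ?_
  · intro y hy
    rw [SimpleGraph.mem_neighborFinset, oddSumGraph_adj hn] at hy
    rw [mem_range]
    omega
  · intro y hy z hz h
    rw [SimpleGraph.mem_neighborFinset, oddSumGraph_adj hn] at hy hz
    exact eq_of_add_mod_eq (x := x) (by omega)
  · intro j hj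
    rw [mem_range] at hj
    have hsum : ((x : ℕ) + (2 * j + 1 + (n - x)) % n) % n = 2 * j + 1 := by
      rw [Nat.add_mod_mod, show (x : ℕ) + (2 * j + 1 + (n - x)) = 2 * j + 1 + n by omega,
        Nat.add_mod_right, Nat.mod_eq_of_lt (by omega)]
    refine ⟨⟨(2 * j + 1 + (n - x)) % n, Nat.mod_lt _ (by omega)⟩, ?_, ?_⟩
    · rw [SimpleGraph.mem_neighborFinset, oddSumGraph_adj hn]
      simp only [hsum]
      omega
    · simp only [hsum]
      omega

/-- The graph `oddSumGraph n k` is `k`-edge-choosable. -/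
theorem exists_list_coloring_oddSumGraph {n k : ℕ} (hn : Even n)
    (L : Sym2 (Fin n) → Finset ℕ) (hL : ∀ e : Sym2 (Fin n), ¬ e.IsDiag → #(L e) = k)
    [DecidableRel (oddSumGraph n k).Adj] :
    ∃ c : Sym2 (Fin n) → ℕ,
      (∀ u v, (oddSumGraph n k).Adj u v → c s(u, v) ∈ L s(u, v)) ∧
      ∀ v x, #{u | (oddSumGraph n k).Adj v u ∧ c s(v, u) = x} ≤ 1 := by
  let S : Finset (Fin n × Fin n) := {p | (p.1 : ℕ) % 2 = 0 ∧ (oddSumGraph n k).Adj p.1 p.2}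
  have hS : ∀ u v, (u, v) ∈ S ↔ (u : ℕ) % 2 = 0 ∧ (oddSumGraph n k).Adj u v := by simp [S]
  have hpar : ∀ u v, (oddSumGraph n k).Adj u v → ((u : ℕ) + v) % 2 = 1 := fun u v h => by
    rw [oddSumGraph_adj hn, mod_two_of_even hn] at h
    exact h.1
  obtain ⟨c, hc, h1, h2⟩ := exists_list_coloring_of_orientation (k := k) (s := 1) S
    (fun p => ((p.1 : ℕ) + p.2) % n / 2) L
    (by
      intro u v h h'
      rw [hS] at h h'
      have := hpar u v h.2
      omega)
    (by
      rintro ⟨u, v⟩ h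
      rw [hS, oddSumGraph_adj hn] at h
      dsimp only
      omega)
    (by
      rintro ⟨u, v⟩ h ⟨u', v'⟩ h' rfl heq
      rw [hS, oddSumGraph_adj hn] at h h'
      dsimp only at heq h'
      rw [eq_of_add_mod_eq (x := u) (y := v) (z := v') (by omega)])
    (by
      rintro ⟨u, v⟩ h ⟨u', v'⟩ h' rfl heq
      rw [hS, oddSumGraph_adj hn] at h h'
      dsimp only at heq h'
      rw [eq_of_add_mod_eq (x := v) (y := u) (z := u')
        (by rw [add_comm, add_comm (v : ℕ)]; omega)])
    hL
  refine ⟨c, fun u v h => ?_, fun v x => ?_⟩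
  · by_cases hu : (u : ℕ) % 2 = 0
    · exact hc u v ((hS u v).2 ⟨hu, h⟩)
    · rw [Sym2.eq_swap]
      have := hpar u v h
      exact hc v u ((hS v u).2 ⟨by omega, h.symm⟩)
  · by_cases hv : (v : ℕ) % 2 = 0
    · refine (card_le_card fun u hu => ?_).trans (h1 v x)
      rw [mem_filter] at hu ⊢
      exact ⟨hu.1, (hS v u).2 ⟨hv, hu.2.1⟩, hu.2.2⟩
    · refine (card_le_card fun u hu => ?_).trans (h2 v x)
      rw [mem_filter] at hu ⊢
      have := hpar v u hu.2.1
      exact ⟨hu.1, (hS u v).2 ⟨by omega, hu.2.1.symm⟩, hu.2.2⟩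

/-- The complete graph on `(r - 1) * k + 1` vertices can be coloured from lists of size `k` so that
every colour class has maximum degree at most `r - 1`. -/
theorem exists_list_coloring_complete {k r n : ℕ} (hr : 3 ≤ r) (hrk : ¬ (Even r ∧ Even k))
    (hn : n = (r - 1) * k + 1) (L : Sym2 (Fin n) → Finset ℕ)
    (hL : ∀ e : Sym2 (Fin n), ¬ e.IsDiag → #(L e) = k) :
    ∃ c : Sym2 (Fin n) → ℕ, (∀ e, ¬ e.IsDiag → c e ∈ L e) ∧
      ∀ v x, #{u | v ≠ u ∧ c s(v, u) = x} ≤ r - 1 := by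
  classical
  rcases Nat.even_or_odd r with hre | ⟨s, rfl⟩
  · have hk : Odd k := Nat.not_even_iff_odd.1 fun h => hrk ⟨hre, h⟩
    obtain ⟨s, rfl⟩ : ∃ s, r = 2 * s + 2 := by
      obtain ⟨s, rfl⟩ := hre
      exact ⟨s - 1, by omega⟩
    have hs : 1 ≤ s := by omega
    rw [show 2 * s + 2 - 1 = 2 * s + 1 by omega] at hn ⊢
    have hne : Even n := hn ▸ ((odd_two_mul_add_one s).mul hk).add_one
    have hkn : 2 * k ≤ n := by nlinarith
    obtain ⟨a, ha, ha'⟩ := exists_list_coloring_oddSumGraph hne L hL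
    have hreg : (oddSumGraph n k)ᶜ.IsRegularOfDegree (2 * (k * s)) := by
      have := (oddSumGraph_isRegularOfDegree hne hkn).compl
      rw [Fintype.card_fin, show n - 1 - k = 2 * (k * s) by
        rw [hn, Nat.add_sub_cancel, Nat.add_mul, one_mul, Nat.add_sub_cancel]; ring] at this
      convert this
    obtain ⟨b, hb, hb'⟩ := exists_list_coloring_of_even_regular _ hreg L hL
    refine ⟨fun e => if e ∈ (oddSumGraph n k).edgeSet then a e else b e, ?_, fun v x => ?_⟩
    · intro e he
      induction e with | _ u v =>
      simp only [SimpleGraph.mem_edgeSet]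
      split_ifs with h
      · exact ha u v h
      · exact hb u v ((SimpleGraph.compl_adj _ _ _).2 ⟨by simpa using he, h⟩)
    · have hsub : ({u | v ≠ u ∧ (if s(v, u) ∈ (oddSumGraph n k).edgeSet then a s(v, u)
          else b s(v, u)) = x} : Finset (Fin n)) ⊆
          ({u | (oddSumGraph n k)ᶜ.Adj v u ∧ b s(v, u) = x} : Finset (Fin n)) ∪
          ({u | (oddSumGraph n k).Adj v u ∧ a s(v, u) = x} : Finset (Fin n)) := by
        intro u hu
        simp only [SimpleGraph.mem_edgeSet, mem_filter, mem_univ, true_and, mem_union,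
          SimpleGraph.compl_adj] at hu ⊢
        split_ifs at hu with h <;> tauto
      exact (card_le_card hsub).trans ((card_union_le _ _).trans (add_le_add (hb' v x) (ha' v x)))
  · obtain ⟨c, hc, hc'⟩ := exists_list_coloring_of_even_regular (k := k) (s := s)
      (⊤ : SimpleGraph (Fin n))
      (fun v => by
        rw [SimpleGraph.complete_graph_degree, Fintype.card_fin, hn, Nat.add_sub_cancel,
          Nat.add_sub_cancel]
        ring) L hL
    refine ⟨c, fun e he => ?_, fun v x => ?_⟩
    · induction e with | _ u v =>
      exact hc u v (by simpa using he)
    · simpa using hc' v x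

theorem starGraph_adj_zero {r : ℕ} (i : Fin r) : (starGraph r).Adj 0 i.succ := by
  simp [starGraph, SimpleGraph.fromRel_adj, (Fin.succ_ne_zero i).symm]

/-- A monochromatic star forces a vertex with `r` incident edges of one colour. -/
theorem HasMonoCopy.exists_le_card {r n : ℕ} {β : Type*} [DecidableEq β]
    {c : Sym2 (Fin n) → β} (h : HasMonoCopy (starGraph r) c) :
    ∃ v x, r ≤ #{u | v ≠ u ∧ c s(v, u) = x} := by
  obtain ⟨f, x, hf, hc⟩ := h
  refine ⟨f 0, x, ?_⟩
  calc r = #(univ : Finset (Fin r)) := by simp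
    _ ≤ _ := card_le_card_of_injOn (fun i => f i.succ) (fun i _ => ?_)
      (hf.comp (Fin.succ_injective r)).injOn
  simp only [coe_filter, mem_univ, true_and, Set.mem_ofPred_eq]
  exact ⟨hf.ne (Fin.succ_ne_zero i).symm, hc _ _ (starGraph_adj_zero i)⟩

theorem hasMonoCopy_of_le_card {r n : ℕ} {β : Type*} [DecidableEq β]
    {c : Sym2 (Fin n) → β} {v : Fin n} {x : β} (h : r ≤ #{u | v ≠ u ∧ c s(v, u) = x}) :
    HasMonoCopy (starGraph r) c := by
  let g := orderEmbOfCardLe _ h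
  have hg : ∀ i, v ≠ g i ∧ c s(v, g i) = x := fun i => by
    simpa using orderEmbOfCardLe_mem _ h i
  refine ⟨Fin.cons v g, x, ?_, ?_⟩
  · rw [Fin.cons_injective_iff]
    refine ⟨?_, g.injective⟩
    rintro ⟨i, hi⟩
    exact (hg i).1 hi.symm
  · intro a b hab
    rw [starGraph, SimpleGraph.fromRel_adj] at hab
    obtain ⟨hne, rfl | rfl⟩ := hab
    · obtain ⟨i, rfl⟩ := Fin.exists_succ_eq.2 hne.symm
      simpa using (hg i).2
    · obtain ⟨i, rfl⟩ := Fin.exists_succ_eq.2 hne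
      rw [Sym2.eq_swap]
      simpa using (hg i).2

/-- Any `k`-colouring of the complete graph on `(r - 1) * k + 2` vertices contains a monochromatic
`K_{1,r}`. -/
theorem hasMonoCopy_starGraph {r k : ℕ} (hr : 0 < r)
    (c : Sym2 (Fin ((r - 1) * k + 2)) → Fin k) : HasMonoCopy (starGraph r) c := by
  obtain ⟨x, -, hx⟩ := exists_lt_card_fiber_of_mul_lt_card_of_maps_to
    (s := (univ : Finset (Fin ((r - 1) * k + 2))).erase 0) (t := univ) (n := r - 1)
    (f := fun u => c s(0, u)) (fun _ _ => mem_univ _)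
    (by rw [card_erase_of_mem (mem_univ _), card_univ, card_univ, Fintype.card_fin,
          Fintype.card_fin, mul_comm]; omega)
  refine hasMonoCopy_of_le_card (v := 0) (x := x) ?_
  have : ({u | 0 ≠ u ∧ c s(0, u) = x} : Finset (Fin ((r - 1) * k + 2))) =
      ((univ : Finset (Fin ((r - 1) * k + 2))).erase 0).filter fun u => c s(0, u) = x := by
    ext u
    simp [eq_comm]
  rw [this]
  omega

/-- For `n ≤ (r - 1) * k + 1`, the complete graph on `n` vertices can be coloured from lists of size
`k` without a monochromatic `K_{1,r}`. -/
theorem exists_list_coloring_not_hasMonoCopy {k r n : ℕ} (hr : 3 ≤ r) (hrk : ¬ (Even r ∧ Even k))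
    (hn : n ≤ (r - 1) * k + 1) (L : Sym2 (Fin n) → Finset ℕ)
    (hL : ∀ e : Sym2 (Fin n), ¬ e.IsDiag → #(L e) = k) :
    ∃ c : Sym2 (Fin n) → ℕ, (∀ e, ¬ e.IsDiag → c e ∈ L e) ∧ ¬ HasMonoCopy (starGraph r) c := by
  classical
  have hinj := Fin.castLE_injective hn
  have hmap := Sym2.map.injective hinj
  have hdiag : ∀ e : Sym2 (Fin n), (Sym2.map (Fin.castLE hn) e).IsDiag ↔ e.IsDiag := by
    intro e
    induction e with | _ u v =>
    simp [hinj.eq_iff]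
  obtain ⟨c, hc, hdeg⟩ := exists_list_coloring_complete hr hrk rfl
    (Function.extend (Sym2.map (Fin.castLE hn)) L fun _ => range k) (by
      intro e he
      by_cases h : ∃ e', Sym2.map (Fin.castLE hn) e' = e
      · obtain ⟨e', rfl⟩ := h
        rw [hmap.extend_apply]
        exact hL e' (mt (hdiag e').2 he)
      · rw [Function.extend_apply' _ _ _ h, card_range])
  refine ⟨fun e => c (Sym2.map (Fin.castLE hn) e), fun e he => ?_, ?_⟩
  · have := hc _ (mt (hdiag e).1 he)
    rwa [hmap.extend_apply] at this
  · rintro ⟨f, x, hf, h⟩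
    obtain ⟨v, y, hv⟩ := HasMonoCopy.exists_le_card (c := c)
      ⟨fun i => Fin.castLE hn (f i), x, hinj.comp hf, h⟩
    have := hdeg v y
    omega

/-- Constant lists show that the list Ramsey property is implied by the Ramsey property. -/
theorem exists_lists_of_forall_coloring {α : Type*} {G : SimpleGraph α} {k n : ℕ} (hk : 0 < k)
    (h : ∀ c : Sym2 (Fin n) → Fin k, HasMonoCopy G c) :
    ∃ L : Sym2 (Fin n) → Finset ℕ, (∀ e : Sym2 (Fin n), ¬ e.IsDiag → (L e).card = k) ∧
      ∀ c : Sym2 (Fin n) → ℕ, (∀ e : Sym2 (Fin n), ¬ e.IsDiag → c e ∈ L e) →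
        HasMonoCopy G c := by
  refine ⟨fun _ => range k, fun _ _ => card_range k, fun c hc => ?_⟩
  obtain ⟨f, x, hf, hx⟩ := h fun e => if he : c e < k then ⟨c e, he⟩ else ⟨0, hk⟩
  refine ⟨f, x, hf, fun a b hab => ?_⟩
  have hlt : c s(f a, f b) < k := mem_range.1 (hc _ (by simpa using hf.ne (G.ne_of_adj hab)))
  simp only [← hx a b hab, dif_pos hlt]

theorem list_ramsey_star_large (k : ℕ) (hk : 0 < k) :
    ∃ w : ℕ, ∀ r : ℕ, w ≤ r → ¬ (Even r ∧ Even k) →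
      listRamsey (starGraph r) k = (r - 1) * k + 2 ∧
      ramsey (starGraph r) k = (r - 1) * k + 2 := by
  refine ⟨3, fun r hr hrk => ?_⟩
  have hupper : ∀ c : Sym2 (Fin ((r - 1) * k + 2)) → Fin k, HasMonoCopy (starGraph r) c :=
    hasMonoCopy_starGraph (by omega)
  have hlower : ∀ n, (∃ L : Sym2 (Fin n) → Finset ℕ,
      (∀ e : Sym2 (Fin n), ¬ e.IsDiag → (L e).card = k) ∧
      ∀ c : Sym2 (Fin n) → ℕ, (∀ e : Sym2 (Fin n), ¬ e.IsDiag → c e ∈ L e) →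
        HasMonoCopy (starGraph r) c) → (r - 1) * k + 2 ≤ n := by
    rintro n ⟨L, hL, h⟩
    by_contra hn
    obtain ⟨c, hc, hc'⟩ := exists_list_coloring_not_hasMonoCopy hr hrk (by omega) L hL
    exact hc' (h c hc)
  constructor
  · exact IsLeast.csInf_eq ⟨exists_lists_of_forall_coloring hk hupper, hlower⟩
  · exact IsLeast.csInf_eq ⟨hupper, fun n hn => hlower n (exists_lists_of_forall_coloring hk hn)⟩
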